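/- Let α ∈ (0,1/24). There exists δ ∈ (0,1), depending only on α, with the following property: for every x = (x1,x2) in the closure of D⁺ with x2 ≤ x1 ≤ δ and every measurable ω : ℝ×(0,∞) → ℝ which is odd in x1 and satisfies χ_{A(x)} ≤ ω ≤ 1 on D⁺, one has u1(x) := −∫_{D⁺} K1(x,y) ω(y) dy ≤ −(1/(50α))·x1^{1−2α}. -/

import Mathlib

open MeasureTheory

noncomputable section

/-- Euclidean distance between points of `ℝ²` written as pairs. -/
def edist2 (p q : ℝ × ℝ) : ℝ := Real.sqrt ((p.1 - q.1) ^ 2 + (p.2 - q.2) ^ 2)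

/-- The open quadrant `D⁺ = (0,∞) × (0,∞)`. -/
def Dplus : Set (ℝ × ℝ) := Set.Ioi 0 ×ˢ Set.Ioi 0

/-- `K1(x,y) = (y₂-x₂)/|x-y|^{2+2α} - (y₂-x₂)/|x-ỹ|^{2+2α}
  - (y₂+x₂)/|x+y|^{2+2α} + (y₂+x₂)/|x-ȳ|^{2+2α}`, where `ỹ = (-y₁,y₂)`, `ȳ = (y₁,-y₂)`. -/
def K1 (α : ℝ) (x y : ℝ × ℝ) : ℝ :=
  (y.2 - x.2) / edist2 x y ^ (2 + 2 * α)
  - (y.2 - x.2) / edist2 x (-y.1, y.2) ^ (2 + 2 * α)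
  - (y.2 + x.2) / edist2 x (-y.1, -y.2) ^ (2 + 2 * α)
  + (y.2 + x.2) / edist2 x (y.1, -y.2) ^ (2 + 2 * α)

/-- `K2(x,y) = (y₁-x₁)/|x-y|^{2+2α} + (y₁+x₁)/|x-ỹ|^{2+2α}
  - (y₁+x₁)/|x+y|^{2+2α} - (y₁-x₁)/|x-ȳ|^{2+2α}`, where `ỹ = (-y₁,y₂)`, `ȳ = (y₁,-y₂)`. -/
def K2 (α : ℝ) (x y : ℝ × ℝ) : ℝ :=
  (y.1 - x.1) / edist2 x y ^ (2 + 2 * α)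
  + (y.1 + x.1) / edist2 x (-y.1, y.2) ^ (2 + 2 * α)
  - (y.1 + x.1) / edist2 x (-y.1, -y.2) ^ (2 + 2 * α)
  - (y.1 - x.1) / edist2 x (y.1, -y.2) ^ (2 + 2 * α)

/-- The triangle `A(x) = {y : x₁ < y₁ < x₁+1, x₂ < y₂ < x₂ + (y₁ - x₁)}`. -/
def Atri (x : ℝ × ℝ) : Set (ℝ × ℝ) :=
  {y : ℝ × ℝ | x.1 < y.1 ∧ y.1 < x.1 + 1 ∧ x.2 < y.2 ∧ y.2 < x.2 + (y.1 - x.1)}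

open Real Set Filter Topology

/- Put `s = x.1` and split `K1` into the kernels of two mirror pairs of vortices, at the vertical
offsets `y.2 - x.2` and `y.2 + x.2`. The second is nonnegative on `D⁺`, and the first has the
sign of `y.2 - x.2`, so the integral of `K1 * ω` is at least that of the first kernel over the
triangle `A(x)` plus that over the strip `y.2 < x.2`. On a horizontal half-line the integral of a
mirror pair telescopes to an integral of the single-vortex kernel over `-s..s`, which the Poisson
kernel controls: the strip costs at most `π / (1 - 2 * α) * x.2 ^ (1 - 2 * α)`. On the slice of
the triangle at height `v` the same telescoping leaves a window of length `2 * s` starting at the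
diagonal, where the kernel is at least a multiple of `v * (v + 2 * s) ^ (-2 - 2 * α)`.
Integrating over `v` gives a multiple of `s ^ (1 - 2 * α) / α`, up to an error of order `s`
absorbed by taking `δ` small. -/

section RealIntegrals

lemma exists_mul_le_mul_rpow {p ε : ℝ} (hp : p < 1) (hε : 0 < ε) (M : ℝ) :
    ∃ δ ∈ Ioo (0 : ℝ) 1, ∀ s : ℝ, 0 ≤ s → s ≤ δ → M * s ≤ ε * s ^ p := by
  have hlim : Tendsto (fun s : ℝ => M * s ^ (1 - p)) (𝓝 0) (𝓝 0) := by
    simpa [zero_rpow (sub_pos.2 hp).ne'] using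
      ((continuous_rpow_const (sub_pos.2 hp).le).tendsto 0).const_mul M
  obtain ⟨δ, hδ, hM⟩ := Metric.eventually_nhds_iff.1 (hlim.eventually_le_const hε)
  refine ⟨min (δ / 2) (1 / 2), ⟨by positivity, (min_le_right _ _).trans_lt (by norm_num)⟩,
    fun s hs hsδ => ?_⟩
  rcases hs.eq_or_lt with rfl | hs
  · simpa using mul_nonneg hε.le (rpow_nonneg le_rfl p)
  have hsδ' : dist s 0 < δ := by
    rw [Real.dist_0_eq_abs, abs_of_pos hs]
    linarith [hsδ.trans (min_le_left _ _)]
  calc M * s = M * s ^ (1 - p) * s ^ p := by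
        rw [mul_assoc, ← rpow_add hs, sub_add_cancel, rpow_one]
    _ ≤ ε * s ^ p := mul_le_mul_of_nonneg_right (hM hsδ') (rpow_nonneg hs.le p)

lemma integrable_of_norm_le_abs_rpow {F : Type*} [NormedAddCommGroup F] {f : ℝ → F}
    {p q A B : ℝ} (hf : AEStronglyMeasurable f) (hp : -1 < p) (hq : q < -1)
    (hA : ∀ v ≠ 0, ‖f v‖ ≤ A * |v| ^ p) (hB : ∀ v ≠ 0, ‖f v‖ ≤ B * |v| ^ q) :
    Integrable f := by
  have hD : IntegrableOn (fun r : ℝ => min (A * r ^ p) (B * r ^ q)) (Ioi 0) := by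
    have hnonneg (r : ℝ) (hr : 0 < r) : 0 ≤ min (A * r ^ p) (B * r ^ q) := by
      have hle := le_min (hA r hr.ne') (hB r hr.ne')
      rw [abs_of_pos hr] at hle
      exact (norm_nonneg _).trans hle
    have hmeas : Measurable fun r : ℝ => min (A * r ^ p) (B * r ^ q) := by fun_prop
    rw [← Ioo_union_Ici_eq_Ioi one_pos, integrableOn_union, integrableOn_Ici_iff_integrableOn_Ioi]
    constructor
    · refine (((intervalIntegral.integrableOn_Ioo_rpow_iff one_pos).2 hp).const_mul A).mono'
        hmeas.aestronglyMeasurable (ae_restrict_of_forall_mem measurableSet_Ioo fun r hr => ?_)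
      rw [norm_of_nonneg (hnonneg r hr.1)]
      exact min_le_left _ _
    · refine ((integrableOn_Ioi_rpow_of_lt hq one_pos).const_mul B).mono'
        hmeas.aestronglyMeasurable (ae_restrict_of_forall_mem measurableSet_Ioi fun r hr => ?_)
      rw [norm_of_nonneg (hnonneg r (one_pos.trans hr))]
      exact min_le_right _ _
  have hD' : Integrable fun v : ℝ => min (A * ‖v‖ ^ p) (B * ‖v‖ ^ q) :=
    (integrable_fun_norm_addHaar volume (f := fun r : ℝ => min (A * r ^ p) (B * r ^ q))).2
      (by simpa using hD)
  refine hD'.mono' hf ?_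
  filter_upwards [Measure.ae_ne volume 0] with v hv
  exact le_min (hA v hv) (hB v hv)

lemma integral_Ioi_comp_sub_sub_comp_add {h : ℝ → ℝ} (hh : Integrable h) (s : ℝ) :
    ∫ t in Ioi 0, (h (t - s) - h (t + s)) = ∫ u in (-s)..s, h u := by
  have shift (c : ℝ) : ∫ t in Ioi 0, h (t + c) = ∫ u in Ioi c, h u := by
    simpa using (measurePreserving_add_right volume c).setIntegral_preimage_emb
      (measurableEmbedding_addRight c) h (Ioi c)
  simp only [sub_eq_add_neg _ s]
  rw [integral_sub (hh.comp_add_right (-s)).integrableOn (hh.comp_add_right s).integrableOn,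
    shift, shift, intervalIntegral.integral_Ioi_sub_Ioi' hh.integrableOn hh.integrableOn]

lemma intervalIntegrable_mul_add_rpow {c : ℝ} (hc : 0 < c) (p : ℝ) :
    IntervalIntegrable (fun v => v * (v + c) ^ p) volume 0 1 := by
  refine (continuousOn_id.mul
    (ContinuousOn.rpow_const (by fun_prop) fun v hv => .inl ?_)).intervalIntegrable
  rw [uIcc_of_le zero_le_one] at hv
  linarith [hv.1]

lemma le_integral_mul_add_rpow {a c : ℝ} (ha : 0 < a) (hc : 0 < c) :
    c ^ (-a) / (a * (1 + a)) - 1 / a ≤ ∫ v in (0 : ℝ)..1, v * (v + c) ^ (-2 - a) := by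
  let F (v : ℝ) : ℝ := c * (v + c) ^ (-1 - a) / (1 + a) - (v + c) ^ (-a) / a
  have hF (v : ℝ) (hv : v ∈ uIcc 0 1) : HasDerivAt F (v * (v + c) ^ (-2 - a)) v := by
    have hvc : 0 < v + c := by
      rw [uIcc_of_le zero_le_one] at hv
      linarith [hv.1]
    have hid : HasDerivAt (fun w : ℝ => w + c) 1 v := (hasDerivAt_id v).add_const c
    convert! (((hid.rpow_const (p := -1 - a) (.inl hvc.ne')).const_mul c).div_const
      (1 + a)).sub ((hid.rpow_const (p := -a) (.inl hvc.ne')).div_const a) using 1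
    rw [show -a - 1 = 1 + (-2 - a) by ring, show -1 - a - 1 = -2 - a by ring,
      rpow_add hvc, rpow_one]
    field_simp
    ring
  rw [intervalIntegral.integral_eq_sub_of_hasDerivAt hF (intervalIntegrable_mul_add_rpow hc _)]
  have hF₀ : F 0 = -(c ^ (-a) / (a * (1 + a))) := by
    simp only [F, zero_add]
    rw [show -a = 1 + (-1 - a) by ring, rpow_add hc, rpow_one]
    field_simp
    ring
  have hF₁ : -(1 / a) ≤ F 1 := by
    have : (1 + c) ^ (-a) ≤ 1 := rpow_le_one_of_one_le_of_nonpos (by linarith) (by linarith)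
    have : (1 + c) ^ (-a) / a ≤ 1 / a := by gcongr
    have : 0 ≤ c * (1 + c) ^ (-1 - a) / (1 + a) := by positivity
    simp only [F]
    linarith
  linarith

end RealIntegrals

section BiotSavart

/-- The first component `v / |(u, v)| ^ (2 + 2 * α)` of the generalised Biot–Savart kernel at the
offset `(u, v)`, written with a negative power of `|(u, v)| ^ 2`. -/
def bsKernel (α u v : ℝ) : ℝ := v * (u ^ 2 + v ^ 2) ^ (-(1 + α))

/-- The kernel of a vortex at horizontal position `t` together with its mirror image of opposite
sign at `-t`, seen from the horizontal position `s` at vertical offset `v`. -/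
def mirrorKernel (α s t v : ℝ) : ℝ := bsKernel α (t - s) v - bsKernel α (t + s) v

variable {α s t u u' v w : ℝ}

lemma bsKernel_neg_right (α u v : ℝ) : bsKernel α u (-v) = -bsKernel α u v := by
  simp [bsKernel]

lemma bsKernel_nonneg (hv : 0 ≤ v) : 0 ≤ bsKernel α u v :=
  mul_nonneg hv (by positivity)

lemma bsKernel_le_bsKernel (hα : -1 ≤ α) (hv : 0 ≤ v) (hu : u ^ 2 ≤ u' ^ 2) :
    bsKernel α u' v ≤ bsKernel α u v := by
  rcases hv.eq_or_lt with rfl | hv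
  · simp [bsKernel]
  · exact mul_le_mul_of_nonneg_left
      (rpow_le_rpow_of_nonpos (by positivity) (by linarith) (by linarith)) hv.le

lemma bsKernel_zero_left (α : ℝ) (hv : 0 < v) : bsKernel α 0 v = v ^ (-1 - 2 * α) := by
  rw [bsKernel, zero_pow two_ne_zero, zero_add, ← rpow_two, ← rpow_mul hv.le,
    show -1 - 2 * α = 1 + 2 * -(1 + α) by ring, rpow_add hv, rpow_one]

lemma mul_rpow_le_bsKernel (hα : -1 ≤ α) (hv : 0 < v) (hvw : v ≤ w) :
    2 ^ (-(1 + α)) * (v * w ^ (-2 - 2 * α)) ≤ bsKernel α w v := by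
  have hw : 0 < w := hv.trans_le hvw
  calc 2 ^ (-(1 + α)) * (v * w ^ (-2 - 2 * α)) = v * (2 * w ^ 2) ^ (-(1 + α)) := by
        rw [mul_rpow zero_le_two (sq_nonneg w), ← rpow_two, ← rpow_mul hw.le,
          show 2 * -(1 + α) = -2 - 2 * α by ring]
        ring
    _ ≤ bsKernel α w v := mul_le_mul_of_nonneg_left
        (rpow_le_rpow_of_nonpos (by positivity) (by nlinarith) (by linarith)) hv.le

lemma bsKernel_le_one (hα : -1 ≤ α) (hv : v ∈ Icc 0 1) (hu : 1 ≤ u) : bsKernel α u v ≤ 1 :=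
  mul_le_one₀ hv.2 (by positivity)
    (rpow_le_one_of_one_le_of_nonpos (by nlinarith [sq_nonneg v]) (by linarith))

lemma continuous_bsKernel (α : ℝ) (hv : 0 < v) : Continuous fun u => bsKernel α u v :=
  continuous_const.mul <| Continuous.rpow_const (by fun_prop) fun _ => .inl (by positivity)

lemma bsKernel_le_poisson (hα : 0 ≤ α) (hv : 0 < v) (u : ℝ) :
    bsKernel α u v ≤ v ^ (-2 * α) * (v⁻¹ * (1 + (u / v) ^ 2)⁻¹) := by
  have hpos : 0 < u ^ 2 + v ^ 2 := by positivity
  calc bsKernel α u v = (u ^ 2 + v ^ 2) ^ (-α) * (v⁻¹ * (1 + (u / v) ^ 2)⁻¹) := by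
        rw [bsKernel, show -(1 + α) = -α - 1 by ring, rpow_sub_one hpos.ne']
        field_simp
        ring
    _ ≤ (v ^ 2) ^ (-α) * (v⁻¹ * (1 + (u / v) ^ 2)⁻¹) :=
        mul_le_mul_of_nonneg_right (rpow_le_rpow_of_nonpos (by positivity)
          (le_add_of_nonneg_left (sq_nonneg u)) (by linarith)) (by positivity)
    _ = v ^ (-2 * α) * (v⁻¹ * (1 + (u / v) ^ 2)⁻¹) := by
        rw [← rpow_two, ← rpow_mul hv.le, mul_neg, neg_mul]

lemma integrable_poisson (hv : 0 < v) : Integrable fun u : ℝ => v⁻¹ * (1 + (u / v) ^ 2)⁻¹ :=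
  (integrable_inv_one_add_sq.comp_div hv.ne').const_mul v⁻¹

lemma integral_poisson (hv : 0 < v) : ∫ u : ℝ, v⁻¹ * (1 + (u / v) ^ 2)⁻¹ = π := by
  rw [integral_const_mul, Measure.integral_comp_div (fun u : ℝ => (1 + u ^ 2)⁻¹),
    integral_univ_inv_one_add_sq, abs_of_pos hv, smul_eq_mul, inv_mul_cancel_left₀ hv.ne']

lemma integrable_bsKernel (hα : 0 ≤ α) (hv : 0 < v) : Integrable fun u => bsKernel α u v := by
  refine ((integrable_poisson hv).const_mul (v ^ (-2 * α))).mono'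
    (continuous_bsKernel α hv).aestronglyMeasurable (.of_forall fun u => ?_)
  rw [norm_of_nonneg (bsKernel_nonneg hv.le)]
  exact bsKernel_le_poisson hα hv u

lemma integral_bsKernel_le (hα : 0 ≤ α) (hv : 0 < v) :
    ∫ u, bsKernel α u v ≤ π * v ^ (-2 * α) :=
  calc ∫ u, bsKernel α u v ≤ ∫ u : ℝ, v ^ (-2 * α) * (v⁻¹ * (1 + (u / v) ^ 2)⁻¹) :=
        integral_mono (integrable_bsKernel hα hv) ((integrable_poisson hv).const_mul _)
          (bsKernel_le_poisson hα hv)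
    _ = π * v ^ (-2 * α) := by rw [integral_const_mul, integral_poisson hv, mul_comm]

lemma mirrorKernel_neg_right (α s t v : ℝ) :
    mirrorKernel α s t (-v) = -mirrorKernel α s t v := by
  simp only [mirrorKernel, bsKernel_neg_right]
  ring

lemma mirrorKernel_nonneg (hα : -1 ≤ α) (hs : 0 ≤ s) (ht : 0 ≤ t) (hv : 0 ≤ v) :
    0 ≤ mirrorKernel α s t v :=
  sub_nonneg.2 (bsKernel_le_bsKernel hα hv (by nlinarith))

lemma mirrorKernel_nonpos (hα : -1 ≤ α) (hs : 0 ≤ s) (ht : 0 ≤ t) (hv : v ≤ 0) :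
    mirrorKernel α s t v ≤ 0 := by
  rw [← neg_neg v, mirrorKernel_neg_right]
  exact neg_nonpos.2 (mirrorKernel_nonneg hα hs ht (neg_nonneg.2 hv))

lemma abs_mirrorKernel (hα : -1 ≤ α) (hs : 0 ≤ s) (ht : 0 ≤ t) (v : ℝ) :
    |mirrorKernel α s t v| = mirrorKernel α s t |v| := by
  rcases le_total 0 v with hv | hv
  · rw [abs_of_nonneg hv, abs_of_nonneg (mirrorKernel_nonneg hα hs ht hv)]
  · rw [abs_of_nonpos hv, abs_of_nonpos (mirrorKernel_nonpos hα hs ht hv), mirrorKernel_neg_right]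

lemma integral_mirrorKernel (hα : 0 ≤ α) (hv : 0 < v) (s : ℝ) :
    ∫ t in Ioi 0, mirrorKernel α s t v = ∫ u in (-s)..s, bsKernel α u v :=
  integral_Ioi_comp_sub_sub_comp_add (integrable_bsKernel hα hv) s

lemma integral_mirrorKernel_le_pi (hα : 0 ≤ α) (hs : 0 ≤ s) (hv : 0 < v) :
    ∫ t in Ioi 0, mirrorKernel α s t v ≤ π * v ^ (-2 * α) := by
  rw [integral_mirrorKernel hα hv, intervalIntegral.integral_of_le (by linarith)]
  exact (setIntegral_le_integral (integrable_bsKernel hα hv)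
    (.of_forall fun _ => bsKernel_nonneg hv.le)).trans (integral_bsKernel_le hα hv)

lemma integral_mirrorKernel_le_two_mul (hα : 0 ≤ α) (hs : 0 ≤ s) (hv : 0 < v) :
    ∫ t in Ioi 0, mirrorKernel α s t v ≤ 2 * s * v ^ (-1 - 2 * α) := by
  rw [integral_mirrorKernel hα hv]
  calc ∫ u in (-s)..s, bsKernel α u v ≤ ∫ _ in (-s)..s, bsKernel α 0 v :=
        intervalIntegral.integral_mono_on (by linarith)
          ((continuous_bsKernel α hv).intervalIntegrable _ _) intervalIntegrable_const
          fun u _ => bsKernel_le_bsKernel (by linarith) hv.le (by simpa using sq_nonneg u)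
    _ = 2 * s * v ^ (-1 - 2 * α) := by
        rw [intervalIntegral.integral_const, bsKernel_zero_left α hv, smul_eq_mul]
        ring

lemma integrableOn_mirrorKernel_slice (hα : 0 ≤ α) (s : ℝ) (v : ℝ) :
    IntegrableOn (fun t => mirrorKernel α s t v) (Ioi 0) := by
  have hpos {w : ℝ} (hw : 0 < w) : Integrable fun t => mirrorKernel α s t w :=
    ((integrable_bsKernel hα hw).comp_sub_right s).sub
      ((integrable_bsKernel hα hw).comp_add_right s)
  rcases lt_trichotomy v 0 with hv | rfl | hv
  · rw [← neg_neg v]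
    simp only [mirrorKernel_neg_right α s _ (-v)]
    exact (hpos (neg_pos.2 hv)).neg.integrableOn
  · simp [mirrorKernel, bsKernel]
  · exact (hpos hv).integrableOn

lemma measurable_mirrorKernel (α s : ℝ) :
    Measurable fun y : ℝ × ℝ => mirrorKernel α s y.1 y.2 := by
  unfold mirrorKernel bsKernel
  fun_prop

lemma integrable_integral_abs_mirrorKernel (hα : 0 < α) (hα' : α < 1 / 2) (hs : 0 ≤ s) :
    Integrable fun v => ∫ t in Ioi 0, |mirrorKernel α s t v| := by
  have hmeas : StronglyMeasurable fun v => ∫ t in Ioi 0, |mirrorKernel α s t v| :=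
    (measurable_mirrorKernel α s).norm.stronglyMeasurable.integral_prod_left'
  have hnorm (v : ℝ) : ‖∫ t in Ioi 0, |mirrorKernel α s t v|‖ =
      ∫ t in Ioi 0, mirrorKernel α s t |v| := by
    rw [norm_of_nonneg (integral_nonneg fun t => abs_nonneg _)]
    exact setIntegral_congr_fun measurableSet_Ioi
      fun t ht => abs_mirrorKernel (by linarith) hs (le_of_lt ht) v
  refine integrable_of_norm_le_abs_rpow (p := -2 * α) (q := -1 - 2 * α) (A := π) (B := 2 * s)
    hmeas.aestronglyMeasurable (by linarith) (by linarith)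
    (fun v hv => ?_) (fun v hv => ?_) <;> rw [hnorm]
  · exact integral_mirrorKernel_le_pi hα.le hs (abs_pos.2 hv)
  · exact integral_mirrorKernel_le_two_mul hα.le hs (abs_pos.2 hv)

lemma integrableOn_mirrorKernel (hα : 0 < α) (hα' : α < 1 / 2) (hs : 0 ≤ s) (c : ℝ) :
    IntegrableOn (fun y : ℝ × ℝ => mirrorKernel α s y.1 (y.2 + c)) (Ioi 0 ×ˢ univ) := by
  have hmeas : Measurable fun y : ℝ × ℝ => mirrorKernel α s y.1 (y.2 + c) :=
    (measurable_mirrorKernel α s).comp (measurable_fst.prodMk (measurable_snd.add_const c))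
  rw [IntegrableOn, Measure.volume_eq_prod, ← Measure.prod_restrict, Measure.restrict_univ,
    integrable_prod_iff' hmeas.aestronglyMeasurable]
  exact ⟨.of_forall fun y₂ => integrableOn_mirrorKernel_slice hα.le s (y₂ + c),
    (integrable_integral_abs_mirrorKernel hα hα' hs).comp_add_right c⟩

lemma neg_le_integral_mirrorKernel_strip {h : ℝ} (hα : 0 < α) (hα' : α < 1 / 2) (hs : 0 ≤ s)
    (hh : 0 ≤ h) :
    -(π / (1 - 2 * α) * h ^ (1 - 2 * α)) ≤
      ∫ y in Ioi 0 ×ˢ Ioo 0 h, mirrorKernel α s y.1 (y.2 - h) := by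
  have hint : IntegrableOn (fun y : ℝ × ℝ => mirrorKernel α s y.1 (y.2 - h))
      (Ioi 0 ×ˢ Ioo 0 h) :=
    (integrableOn_mirrorKernel hα hα' hs (-h)).mono_set (prod_mono_right (subset_univ _))
  have hpow : IntervalIntegrable (fun y₂ : ℝ => (h - y₂) ^ (-2 * α)) volume 0 h := by
    simpa using ((intervalIntegral.intervalIntegrable_rpow' (a := 0) (b := h)
      (r := -2 * α) (by linarith)).comp_sub_left h).symm
  have hslice (y₂ : ℝ) (hy : y₂ ∈ Ioo 0 h) :
      -(π * (h - y₂) ^ (-2 * α)) ≤ ∫ t in Ioi 0, mirrorKernel α s t (y₂ - h) := by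
    simp only [← neg_sub h y₂, mirrorKernel_neg_right, integral_neg]
    exact neg_le_neg (integral_mirrorKernel_le_pi hα.le hs (sub_pos.2 hy.2))
  calc -(π / (1 - 2 * α) * h ^ (1 - 2 * α))
      = ∫ y₂ in Ioo 0 h, -(π * (h - y₂) ^ (-2 * α)) := by
        rw [integral_neg, integral_const_mul, ← integral_Ioc_eq_integral_Ioo,
          ← intervalIntegral.integral_of_le hh,
          intervalIntegral.integral_comp_sub_left (fun v : ℝ => v ^ (-2 * α)) h,
          integral_rpow (.inl (by linarith)), sub_self, sub_zero,
          show -2 * α + 1 = 1 - 2 * α by ring, zero_rpow (by linarith)]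
        ring
    _ ≤ ∫ y₂ in Ioo 0 h, ∫ t in Ioi 0, mirrorKernel α s t (y₂ - h) := by
        rw [IntegrableOn, Measure.volume_eq_prod, ← Measure.prod_restrict] at hint
        exact setIntegral_mono_on
          (((intervalIntegrable_iff_integrableOn_Ioo_of_le hh).1 hpow).const_mul π).neg
          hint.integral_prod_right measurableSet_Ioo hslice
    _ = ∫ y in Ioi 0 ×ˢ Ioo 0 h, mirrorKernel α s y.1 (y.2 - h) := by
        rw [IntegrableOn, Measure.volume_eq_prod, ← Measure.prod_restrict] at hint
        rw [Measure.volume_eq_prod, ← Measure.prod_restrict, integral_prod_symm _ hint]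

lemma integral_mirrorKernel_add (hv : 0 < v) (s a b : ℝ) :
    ∫ u in a..b, mirrorKernel α s (s + u) v =
      (∫ u in a..(a + 2 * s), bsKernel α u v) - ∫ u in b..(b + 2 * s), bsKernel α u v := by
  have hcont := continuous_bsKernel α hv
  have hint (c d : ℝ) : IntervalIntegrable (fun u => bsKernel α u v) volume c d :=
    hcont.intervalIntegrable c d
  have hshift : Continuous fun u => bsKernel α (u + 2 * s) v := hcont.comp (by fun_prop)
  have hsplit (u : ℝ) :
      mirrorKernel α s (s + u) v = bsKernel α u v - bsKernel α (u + 2 * s) v := by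
    rw [mirrorKernel, add_sub_cancel_left, show s + u + s = u + 2 * s by ring]
  simp only [hsplit]
  rw [intervalIntegral.integral_sub (hint a b) (hshift.intervalIntegrable a b),
    intervalIntegral.integral_comp_add_right (fun u => bsKernel α u v),
    intervalIntegral.integral_interval_sub_interval_comm (hint _ _) (hint _ _) (hint _ _)]

lemma le_integral_mirrorKernel_add (hα : -1 ≤ α) (hs : 0 ≤ s) (hv : v ∈ Ioc 0 1) :
    2 * s * (2 ^ (-(1 + α)) * (v * (v + 2 * s) ^ (-2 - 2 * α))) - 2 * s ≤
      ∫ u in v..1, mirrorKernel α s (s + u) v := by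
  have hint (c d : ℝ) : IntervalIntegrable (fun u => bsKernel α u v) volume c d :=
    (continuous_bsKernel α hv.1).intervalIntegrable c d
  have hnear : 2 * s * bsKernel α (v + 2 * s) v ≤ ∫ u in v..(v + 2 * s), bsKernel α u v :=
    calc 2 * s * bsKernel α (v + 2 * s) v = ∫ _ in v..(v + 2 * s), bsKernel α (v + 2 * s) v := by
          simp
      _ ≤ ∫ u in v..(v + 2 * s), bsKernel α u v :=
          intervalIntegral.integral_mono_on (by linarith) intervalIntegrable_const (hint _ _)
            fun u hu => bsKernel_le_bsKernel hα hv.1.le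
              (pow_le_pow_left₀ (hv.1.le.trans hu.1) hu.2 2)
  have hfar : ∫ u in (1 : ℝ)..(1 + 2 * s), bsKernel α u v ≤ 2 * s :=
    calc ∫ u in (1 : ℝ)..(1 + 2 * s), bsKernel α u v ≤ ∫ _ in (1 : ℝ)..(1 + 2 * s), (1 : ℝ) :=
          intervalIntegral.integral_mono_on (by linarith) (hint _ _) intervalIntegrable_const
            fun u hu => bsKernel_le_one hα (Ioc_subset_Icc_self hv) hu.1
      _ = 2 * s := by simp
  have hkernel := mul_le_mul_of_nonneg_left
    (mul_rpow_le_bsKernel hα hv.1 (w := v + 2 * s) (by linarith)) (mul_nonneg zero_le_two hs)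
  rw [integral_mirrorKernel_add hv.1]
  linarith

end BiotSavart

section Triangle

variable {E : Type*} [NormedAddCommGroup E] {x : ℝ × ℝ} {f : ℝ × ℝ → E}

lemma measurableSet_Atri (x : ℝ × ℝ) : MeasurableSet (Atri x) := by
  unfold Atri
  measurability

lemma Atri_subset_Dplus (hx₁ : 0 ≤ x.1) (hx₂ : 0 ≤ x.2) : Atri x ⊆ Dplus :=
  fun _ hy => ⟨hx₁.trans_lt hy.1, hx₂.trans_lt hy.2.2.1⟩

lemma add_mem_Atri_iff {u v : ℝ} : (u, v) + x ∈ Atri x ↔ v ∈ Ioo 0 1 ∧ u ∈ Ioo v 1 := by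
  simp only [Atri, mem_ofPred_eq, Prod.fst_add, Prod.snd_add, mem_Ioo]
  constructor
  · rintro ⟨-, hu, hv, hvu⟩
    refine ⟨⟨?_, ?_⟩, ?_, ?_⟩ <;> linarith
  · rintro ⟨⟨hv, -⟩, hvu, hu⟩
    refine ⟨?_, ?_, ?_, ?_⟩ <;> linarith

lemma integrable_indicator_Atri_add (hf : IntegrableOn f (Atri x)) :
    Integrable (fun z => (Atri x).indicator f (z + x)) (volume.prod volume) := by
  rw [← Measure.volume_eq_prod]
  exact (hf.integrable_indicator (measurableSet_Atri x)).comp_add_right x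

variable [NormedSpace ℝ E]

lemma integral_indicator_Atri_add (x : ℝ × ℝ) (f : ℝ × ℝ → E) (v : ℝ) :
    ∫ u, (Atri x).indicator f ((u, v) + x) =
      (Ioo 0 1).indicator (fun v => ∫ u in v..1, f ((u, v) + x)) v := by
  by_cases hv : v ∈ Ioo 0 1
  · rw [indicator_of_mem hv, intervalIntegral.integral_of_le hv.2.le, integral_Ioc_eq_integral_Ioo,
      ← integral_indicator measurableSet_Ioo]
    congr 1 with u
    classical simp only [indicator_apply, add_mem_Atri_iff, hv, true_and]
  · rw [indicator_of_notMem hv]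
    classical simp only [indicator_apply, add_mem_Atri_iff, hv, false_and, if_false, integral_zero]

lemma intervalIntegrable_integral_Atri (hf : IntegrableOn f (Atri x)) :
    IntervalIntegrable (fun v => ∫ u in v..1, f ((u, v) + x)) volume 0 1 := by
  rw [intervalIntegrable_iff_integrableOn_Ioo_of_le zero_le_one,
    ← integrable_indicator_iff measurableSet_Ioo]
  exact (integrable_indicator_Atri_add hf).integral_prod_right.congr
    (.of_forall fun v => integral_indicator_Atri_add x f v)

lemma setIntegral_Atri (hf : IntegrableOn f (Atri x)) :
    ∫ y in Atri x, f y = ∫ v in (0 : ℝ)..1, ∫ u in v..1, f ((u, v) + x) := by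
  calc ∫ y in Atri x, f y = ∫ z, (Atri x).indicator f (z + x) := by
        rw [integral_add_right_eq_self, integral_indicator (measurableSet_Atri x)]
    _ = ∫ v, ∫ u, (Atri x).indicator f ((u, v) + x) := by
        rw [Measure.volume_eq_prod, integral_prod_symm _ (integrable_indicator_Atri_add hf)]
    _ = ∫ v in (0 : ℝ)..1, ∫ u in v..1, f ((u, v) + x) := by
        simp only [integral_indicator_Atri_add]
        rw [integral_indicator measurableSet_Ioo, intervalIntegral.integral_of_le zero_le_one,
          integral_Ioc_eq_integral_Ioo]

end Triangle

section Velocity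

variable {α : ℝ} {x y : ℝ × ℝ} {ω : ℝ × ℝ → ℝ}

lemma edist2_rpow (α : ℝ) (p q : ℝ × ℝ) :
    edist2 p q ^ (2 + 2 * α) = ((p.1 - q.1) ^ 2 + (p.2 - q.2) ^ 2) ^ (1 + α) := by
  rw [edist2, sqrt_eq_rpow, ← rpow_mul (by positivity),
    show 1 / 2 * (2 + 2 * α) = 1 + α by ring]

lemma div_edist2_rpow (α c : ℝ) (p q : ℝ × ℝ) :
    c / edist2 p q ^ (2 + 2 * α) = c * ((q.1 - p.1) ^ 2 + (q.2 - p.2) ^ 2) ^ (-(1 + α)) := by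
  rw [edist2_rpow, rpow_neg (by positivity), div_eq_mul_inv, sub_sq_comm p.1, sub_sq_comm p.2]

lemma K1_eq_mirrorKernel_add (α : ℝ) (x y : ℝ × ℝ) :
    K1 α x y = mirrorKernel α x.1 y.1 (y.2 - x.2) + mirrorKernel α x.1 y.1 (y.2 + x.2) := by
  simp only [K1, mirrorKernel, bsKernel, div_edist2_rpow]
  rw [← neg_sq (-y.1 - x.1), ← neg_sq (-y.2 - x.2), show -(-y.1 - x.1) = y.1 + x.1 by ring,
    show -(-y.2 - x.2) = y.2 + x.2 by ring]
  ring

lemma measurableSet_Dplus : MeasurableSet Dplus :=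
  measurableSet_Ioi.prod measurableSet_Ioi

lemma Dplus_subset_Ioi_prod_univ : Dplus ⊆ Ioi 0 ×ˢ univ :=
  prod_mono_right (subset_univ _)

lemma integrableOn_K1 (hα : 0 < α) (hα' : α < 1 / 2) (hx : 0 ≤ x.1) :
    IntegrableOn (K1 α x) Dplus := by
  simp only [funext (K1_eq_mirrorKernel_add α x)]
  exact ((integrableOn_mirrorKernel hα hα' hx (-x.2)).add
    (integrableOn_mirrorKernel hα hα' hx x.2)).mono_set Dplus_subset_Ioi_prod_univ

lemma mul_rpow_sub_mul_le_integral (hα : 0 < α) {s : ℝ} (hs : 0 < s) :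
    2 ^ (-1 - 3 * α) / (α * (1 + 2 * α)) * s ^ (1 - 2 * α) - (2 + 2 ^ (-(1 + α)) / α) * s ≤
      ∫ v in (0 : ℝ)..1,
        (2 * s * (2 ^ (-(1 + α)) * (v * (v + 2 * s) ^ (-2 - 2 * α))) - 2 * s) := by
  have hrpow : 2 ^ (-1 - 3 * α) * s ^ (1 - 2 * α) =
      s * 2 ^ (-(1 + α)) * (2 * s) ^ (-(2 * α)) := by
    rw [mul_rpow zero_le_two hs.le, show -1 - 3 * α = -(1 + α) + -(2 * α) by ring,
      rpow_add two_pos, sub_eq_add_neg, rpow_add hs, rpow_one]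
    ring
  calc 2 ^ (-1 - 3 * α) / (α * (1 + 2 * α)) * s ^ (1 - 2 * α) - (2 + 2 ^ (-(1 + α)) / α) * s
      = 2 * s * (2 ^ (-(1 + α)) *
          ((2 * s) ^ (-(2 * α)) / (2 * α * (1 + 2 * α)) - 1 / (2 * α))) - 2 * s := by
        rw [div_mul_eq_mul_div, hrpow]
        field_simp
        ring
    _ ≤ 2 * s * (2 ^ (-(1 + α)) *
          ∫ v in (0 : ℝ)..1, v * (v + 2 * s) ^ (-2 - 2 * α)) - 2 * s := by
        gcongr
        exact le_integral_mul_add_rpow (by positivity) (by positivity)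
    _ = ∫ v in (0 : ℝ)..1,
          (2 * s * (2 ^ (-(1 + α)) * (v * (v + 2 * s) ^ (-2 - 2 * α))) - 2 * s) := by
        rw [intervalIntegral.integral_sub (((intervalIntegrable_mul_add_rpow (by positivity)
          _).const_mul _).const_mul _) intervalIntegrable_const]
        simp

lemma le_integral_mirrorKernel_Atri (hα : 0 < α) (hα' : α < 1 / 2) (hx₁ : 0 ≤ x.1) :
    2 ^ (-1 - 3 * α) / (α * (1 + 2 * α)) * x.1 ^ (1 - 2 * α) - (2 + 2 ^ (-(1 + α)) / α) * x.1 ≤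
      ∫ y in Atri x, mirrorKernel α x.1 y.1 (y.2 - x.2) := by
  have hint : IntegrableOn (fun y : ℝ × ℝ => mirrorKernel α x.1 y.1 (y.2 - x.2)) (Atri x) :=
    (integrableOn_mirrorKernel hα hα' hx₁ (-x.2)).mono_set
      fun _ hy => ⟨hx₁.trans_lt hy.1, mem_univ _⟩
  rcases hx₁.eq_or_lt with hs | hs
  · rw [← hs, zero_rpow (by linarith), mul_zero, mul_zero, sub_zero]
    exact setIntegral_nonneg (measurableSet_Atri x) fun y hy =>
      mirrorKernel_nonneg (by linarith) le_rfl (hx₁.trans hy.1.le) (sub_nonneg.2 hy.2.2.1.le)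
  rw [setIntegral_Atri hint]
  refine (mul_rpow_sub_mul_le_integral hα hs).trans <|
    intervalIntegral.integral_mono_on_of_le_Ioo zero_le_one
      ((((intervalIntegrable_mul_add_rpow (by positivity) _).const_mul _).const_mul _).sub
        intervalIntegrable_const)
      (intervalIntegrable_integral_Atri hint) fun v hv => ?_
  simpa [add_comm _ x.1] using
    le_integral_mirrorKernel_add (α := α) (by linarith) hs.le (Ioo_subset_Ioc_self hv)

lemma integrableOn_K1_mul (hα : 0 < α) (hα' : α < 1 / 2) (hx : 0 ≤ x.1)
    (hω : AEStronglyMeasurable ω (volume.restrict Dplus)) (hω₁ : ∀ y ∈ Dplus, |ω y| ≤ 1) :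
    IntegrableOn (fun y => K1 α x y * ω y) Dplus :=
  (integrableOn_K1 hα hα' hx).mul_bdd (c := 1) hω
    (ae_restrict_of_forall_mem measurableSet_Dplus hω₁)

lemma indicator_add_indicator_le_K1_mul (hα : -1 ≤ α) (hx₁ : 0 ≤ x.1) (hx₂ : 0 ≤ x.2)
    (hy : y ∈ Dplus) {c : ℝ} (hc : (Atri x).indicator (fun _ => (1 : ℝ)) y ≤ c) (hc₁ : c ≤ 1) :
    (Ioi 0 ×ˢ Ioo 0 x.2).indicator (fun y => mirrorKernel α x.1 y.1 (y.2 - x.2)) y +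
      (Atri x).indicator (fun y => mirrorKernel α x.1 y.1 (y.2 - x.2)) y ≤ K1 α x y * c := by
  have hy₁ : 0 ≤ y.1 := le_of_lt hy.1
  have hy₂ : 0 < y.2 := hy.2
  have hc₀ : 0 ≤ c := (indicator_nonneg (fun _ _ => zero_le_one) y).trans hc
  have hmirror : 0 ≤ mirrorKernel α x.1 y.1 (y.2 + x.2) * c :=
    mul_nonneg (mirrorKernel_nonneg hα hx₁ hy₁ (by linarith)) hc₀
  rw [K1_eq_mirrorKernel_add, add_mul]
  refine le_add_of_le_of_nonneg ?_ hmirror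
  rcases lt_or_ge y.2 x.2 with hlt | hge
  · have hyS : y ∈ Ioi 0 ×ˢ Ioo 0 x.2 := ⟨hy.1, hy₂, hlt⟩
    have hyA : y ∉ Atri x := fun hyA => hlt.not_gt hyA.2.2.1
    rw [indicator_of_mem hyS, indicator_of_notMem hyA, add_zero]
    exact le_mul_of_le_one_right (mirrorKernel_nonpos hα hx₁ hy₁ (by linarith)) hc₁
  · have hyS : y ∉ Ioi 0 ×ˢ Ioo 0 x.2 := fun hyS => hge.not_gt hyS.2.2
    have hnonneg := mirrorKernel_nonneg hα hx₁ hy₁ (sub_nonneg.2 hge)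
    rw [indicator_of_notMem hyS, zero_add]
    by_cases hyA : y ∈ Atri x
    · rw [indicator_of_mem hyA] at hc ⊢
      exact le_mul_of_one_le_right hnonneg hc
    · rw [indicator_of_notMem hyA]
      exact mul_nonneg hnonneg hc₀

lemma le_setIntegral_K1_mul (hα : 0 < α) (hα' : α < 1 / 2) (hx₁ : 0 ≤ x.1) (hx₂ : 0 ≤ x.2)
    (hω : AEStronglyMeasurable ω (volume.restrict Dplus))
    (hωA : ∀ y ∈ Dplus, (Atri x).indicator (fun _ => (1 : ℝ)) y ≤ ω y ∧ ω y ≤ 1) :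
    (∫ y in Ioi 0 ×ˢ Ioo 0 x.2, mirrorKernel α x.1 y.1 (y.2 - x.2)) +
      ∫ y in Atri x, mirrorKernel α x.1 y.1 (y.2 - x.2) ≤ ∫ y in Dplus, K1 α x y * ω y := by
  have hstrip : MeasurableSet (Ioi (0 : ℝ) ×ˢ Ioo 0 x.2) :=
    measurableSet_Ioi.prod measurableSet_Ioo
  have hstripD : Ioi 0 ×ˢ Ioo 0 x.2 ⊆ Dplus := prod_mono_right Ioo_subset_Ioi_self
  have hA := measurableSet_Atri x
  have hint : IntegrableOn (fun y : ℝ × ℝ => mirrorKernel α x.1 y.1 (y.2 - x.2)) Dplus :=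
    (integrableOn_mirrorKernel hα hα' hx₁ (-x.2)).mono_set Dplus_subset_Ioi_prod_univ
  have hω₁ (y) (hy : y ∈ Dplus) : |ω y| ≤ 1 := abs_le.2
    ⟨neg_one_lt_zero.le.trans ((indicator_nonneg (fun _ _ => zero_le_one) y).trans (hωA y hy).1),
      (hωA y hy).2⟩
  rw [← inter_eq_self_of_subset_right hstripD,
    ← inter_eq_self_of_subset_right (Atri_subset_Dplus hx₁ hx₂),
    ← setIntegral_indicator hstrip, ← setIntegral_indicator hA,
    ← integral_add (hint.indicator hstrip) (hint.indicator hA)]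
  exact setIntegral_mono_on ((hint.indicator hstrip).add (hint.indicator hA))
    (integrableOn_K1_mul hα hα' hx₁ hω hω₁) measurableSet_Dplus fun y hy =>
      indicator_add_indicator_le_K1_mul (by linarith) hx₁ hx₂ hy (hωA y hy).1 (hωA y hy).2

end Velocity

lemma one_div_fifty_mul_lt {α : ℝ} (hα : α ∈ Ioo 0 (1 / 24)) :
    1 / (50 * α) < 2 ^ (-1 - 3 * α) / (α * (1 + 2 * α)) - π / (1 - 2 * α) := by
  obtain ⟨hα₀, hα₁⟩ := hα
  have hbernoulli : (2 : ℝ) ^ (3 * α) ≤ 1 + 3 * α := by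
    simpa [one_add_one_eq_two] using
      rpow_one_add_le_one_add_mul_self (s := 1) (by norm_num) (p := 3 * α) (by positivity)
        (by linarith)
  have hpow : 4 / 9 ≤ (2 : ℝ) ^ (-1 - 3 * α) := by
    rw [rpow_sub two_pos, rpow_neg_one, le_div_iff₀ (by positivity)]
    linarith
  have htriangle : 16 / 39 / α ≤ 2 ^ (-1 - 3 * α) / (α * (1 + 2 * α)) := by
    rw [div_div, div_le_div_iff₀ (by positivity) (by positivity)]
    nlinarith
  have hstrip : π / (1 - 2 * α) < 1 / 6 / α := by
    rw [div_div, div_lt_div_iff₀ (by linarith) (by positivity)]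
    nlinarith [pi_lt_d2]
  have hsum : 1 / (50 * α) ≤ 16 / 39 / α - 1 / 6 / α := by
    rw [← sub_div, one_div, mul_inv, ← div_eq_mul_inv]
    gcongr
    norm_num
  linarith

theorem stmt7_general {α κ : ℝ} (hα : α ∈ Ioo 0 (1 / 2))
    (hκ : κ < 2 ^ (-1 - 3 * α) / (α * (1 + 2 * α)) - π / (1 - 2 * α)) :
    ∃ δ ∈ Ioo (0 : ℝ) 1,
      ∀ x : ℝ × ℝ, x ∈ closure Dplus → x.2 ≤ x.1 → x.1 ≤ δ →
      ∀ ω : ℝ × ℝ → ℝ, AEStronglyMeasurable ω (volume.restrict Dplus) →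
        (∀ y ∈ Dplus, (Atri x).indicator (fun _ => (1 : ℝ)) y ≤ ω y ∧ ω y ≤ 1) →
        -∫ y in Dplus, K1 α x y * ω y ≤ -κ * x.1 ^ (1 - 2 * α) := by
  obtain ⟨hα₀, hα₁⟩ := hα
  obtain ⟨δ, hδ, herror⟩ := exists_mul_le_mul_rpow (p := 1 - 2 * α) (by linarith)
    (sub_pos.2 hκ) (2 + 2 ^ (-(1 + α)) / α)
  refine ⟨δ, hδ, fun x hx hx₂₁ hxδ ω hω hωA => ?_⟩
  obtain ⟨hx₁, hx₂⟩ : 0 ≤ x.1 ∧ 0 ≤ x.2 := by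
    simpa [Dplus, closure_prod_eq, Prod.le_def] using hx
  have hstrip := neg_le_integral_mirrorKernel_strip hα₀ hα₁ hx₁ hx₂
  have hheight : π / (1 - 2 * α) * x.2 ^ (1 - 2 * α) ≤ π / (1 - 2 * α) * x.1 ^ (1 - 2 * α) :=
    mul_le_mul_of_nonneg_left (rpow_le_rpow hx₂ hx₂₁ (by linarith))
      (div_nonneg pi_pos.le (by linarith))
  have htriangle := le_integral_mirrorKernel_Atri hα₀ hα₁ hx₁
  have hsplit := le_setIntegral_K1_mul hα₀ hα₁ hx₁ hx₂ hω hωA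
  linarith [herror x.1 hx₁ hxδ]

/-- For `α ∈ (0,1/24)` there is `δ ∈ (0,1)`, depending only on `α`, such that
for every `x` in the closure of `D⁺` with `x₂ ≤ x₁ ≤ δ` and every measurable `ω`, odd in `x₁`,
with `χ_{A(x)} ≤ ω ≤ 1` on `D⁺`:
`u₁(x) = -∫_{D⁺} K1(x,y) ω(y) dy ≤ -(1/(50α))·x₁^{1-2α}`. -/
theorem stmt7 (α : ℝ) (hα : α ∈ Set.Ioo (0 : ℝ) (1/24)) :
    ∃ δ ∈ Set.Ioo (0 : ℝ) 1,
      ∀ x : ℝ × ℝ, x ∈ closure Dplus → x.2 ≤ x.1 → x.1 ≤ δ →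
      ∀ ω : ℝ × ℝ → ℝ, Measurable ω →
        (∀ y : ℝ × ℝ, 0 < y.2 → ω (-y.1, y.2) = -ω (y.1, y.2)) →
        (∀ y ∈ Dplus, (Atri x).indicator (fun _ => (1 : ℝ)) y ≤ ω y ∧ ω y ≤ 1) →
        -∫ y in Dplus, K1 α x y * ω y ≤ -(1 / (50 * α)) * x.1 ^ (1 - 2 * α) := by
  obtain ⟨δ, hδ, hbound⟩ := stmt7_general ⟨hα.1, by linarith [hα.2]⟩ (one_div_fifty_mul_lt hα)
  exact ⟨δ, hδ, fun x hx hx₂₁ hxδ ω hω _ => hbound x hx hx₂₁ hxδ ω hω.aestronglyMeasurable⟩
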